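/- arXiv:math/0306352 — 2 statements merged into one kernel-verified Lean document; each statement's English description precedes it below -/
import Mathlib

section
/- Let w : ℕ → ℝ be a sequence of nonnegative reals, 𝕜 = ℝ or ℂ, and m, M > 0 real numbers. Let x, y : ℕ → 𝕜 be such that Σᵢ wᵢ·|xᵢ|² and Σᵢ wᵢ·|yᵢ|² are finite (summable). If Σᵢ wᵢ·Re[(M·yᵢ − xᵢ)·(conj(xᵢ) − m·conj(yᵢ))] ≥ 0, then (Σᵢ wᵢ·|xᵢ|² · Σᵢ wᵢ·|yᵢ|²)^(1/2) ≤ (1/2)·(M + m)/√(m·M) · Σᵢ wᵢ·Re(xᵢ·conj(yᵢ)). -/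
open RCLike ComplexConjugate

/-!
The weighted sums are norms and inner products of `i ↦ √(w i) • x i` and `i ↦ √(w i) • y i` in `ℓ²`,
so it suffices to treat two vectors of an inner product space. There, expanding the hypothesis
`0 ≤ re ⟪x - a • y, A • y - x⟫` gives `‖x‖ ^ 2 + re (conj a * A) * ‖y‖ ^ 2 ≤ re ⟪(a + A) • y, x⟫`,
and the inequality of arithmetic and geometric means bounds the left-hand side below by
`2 * √(re (conj a * A)) * (‖x‖ * ‖y‖)`.
-/

open scoped InnerProductSpace

section InnerProductSpace

variable {𝕜 E : Type*} [RCLike 𝕜] [SeminormedAddCommGroup E] [InnerProductSpace 𝕜 E]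

theorem re_inner_sub_smul_smul_sub (a A : 𝕜) (x y : E) :
    re ⟪x - a • y, A • y - x⟫_𝕜 =
      re ⟪(a + A) • y, x⟫_𝕜 - (‖x‖ ^ 2 + re (conj a * A) * ‖y‖ ^ 2) := by
  have hA : re ⟪x, A • y⟫_𝕜 = re ⟪A • y, x⟫_𝕜 := inner_re_symm _ _
  have ha : re ⟪a • y, A • y⟫_𝕜 = re (conj a * A) * ‖y‖ ^ 2 := by
    rw [inner_smul_left, inner_smul_right, inner_self_eq_norm_sq_to_K, ← mul_assoc, ← ofReal_pow,
      re_mul_ofReal]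
  simp only [inner_sub_left, inner_sub_right, add_smul, inner_add_left, map_sub, map_add, hA, ha,
    inner_self_eq_norm_sq]
  ring

theorem norm_mul_norm_le_re_inner_div_of_re_inner_nonneg {a A : 𝕜} (haA : 0 < re (conj a * A))
    {x y : E} (h : 0 ≤ re ⟪x - a • y, A • y - x⟫_𝕜) :
    ‖x‖ * ‖y‖ ≤ re ⟪(a + A) • y, x⟫_𝕜 / (2 * √(re (conj a * A))) := by
  rw [re_inner_sub_smul_smul_sub, sub_nonneg] at h
  rw [le_div_iff₀ (by positivity)]
  calc ‖x‖ * ‖y‖ * (2 * √(re (conj a * A)))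
      = 2 * ‖x‖ * (√(re (conj a * A)) * ‖y‖) := by ring
    _ ≤ ‖x‖ ^ 2 + (√(re (conj a * A)) * ‖y‖) ^ 2 := two_mul_le_add_sq _ _
    _ = ‖x‖ ^ 2 + re (conj a * A) * ‖y‖ ^ 2 := by rw [mul_pow, Real.sq_sqrt haA.le]
    _ ≤ re ⟪(a + A) • y, x⟫_𝕜 := h

end InnerProductSpace

section WeightedSequences

variable {ι 𝕜 E : Type*} [RCLike 𝕜] [NormedAddCommGroup E] {w : ι → ℝ}

theorem exists_lp_two_eq_sqrt_smul [NormedSpace 𝕜 E] (hw : ∀ i, 0 ≤ w i) {x : ι → E}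
    (hx : Summable fun i => w i * ‖x i‖ ^ 2) :
    ∃ u : lp (fun _ : ι => E) 2, ∀ i, u i = (√(w i) : 𝕜) • x i := by
  refine ⟨⟨fun i => (√(w i) : 𝕜) • x i, memℓp_gen ?_⟩, fun _ => rfl⟩
  simpa [norm_smul, mul_pow, Real.sq_sqrt (hw _)] using hx

variable [InnerProductSpace 𝕜 E] {x y : ι → E} {u v : lp (fun _ : ι => E) 2}

theorem re_inner_lp_two_eq_tsum_of_eq_sqrt_smul (hw : ∀ i, 0 ≤ w i)
    (hu : ∀ i, u i = (√(w i) : 𝕜) • x i) (hv : ∀ i, v i = (√(w i) : 𝕜) • y i) :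
    re ⟪u, v⟫_𝕜 = ∑' i, w i * re ⟪x i, y i⟫_𝕜 := by
  refine (reCLM.hasSum (lp.hasSum_inner u v)).tsum_eq.symm.trans (tsum_congr fun i => ?_)
  rw [reCLM_apply]
  rw [hu, hv, inner_smul_left, inner_smul_right, conj_ofReal, ← mul_assoc, ← ofReal_mul,
    Real.mul_self_sqrt (hw i)]
  exact re_ofReal_mul _ _

theorem norm_lp_two_eq_sqrt_tsum_of_eq_sqrt_smul (hw : ∀ i, 0 ≤ w i)
    (hu : ∀ i, u i = (√(w i) : 𝕜) • x i) :
    ‖u‖ = √(∑' i, w i * ‖x i‖ ^ 2) := by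
  have h := re_inner_lp_two_eq_tsum_of_eq_sqrt_smul hw hu hu
  simp only [inner_self_eq_norm_sq] at h
  rw [← h, Real.sqrt_sq (norm_nonneg u)]

theorem weighted_sequence_cassels_general (hw : ∀ i, 0 ≤ w i) {a A : 𝕜}
    (haA : 0 < re (conj a * A)) (hx : Summable fun i => w i * ‖x i‖ ^ 2)
    (hy : Summable fun i => w i * ‖y i‖ ^ 2)
    (h : 0 ≤ ∑' i, w i * re ⟪x i - a • y i, A • y i - x i⟫_𝕜) :
    √((∑' i, w i * ‖x i‖ ^ 2) * ∑' i, w i * ‖y i‖ ^ 2) ≤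
      (∑' i, w i * re ⟪(a + A) • y i, x i⟫_𝕜) / (2 * √(re (conj a * A))) := by
  obtain ⟨u, hu⟩ := exists_lp_two_eq_sqrt_smul (𝕜 := 𝕜) hw hx
  obtain ⟨v, hv⟩ := exists_lp_two_eq_sqrt_smul (𝕜 := 𝕜) hw hy
  have coe_smul (c : 𝕜) (i : ι) : (c • v) i = (√(w i) : 𝕜) • c • y i := by
    rw [lp.coeFn_smul, Pi.smul_apply, hv, smul_comm]
  have coe_sub_smul (i : ι) : (u - a • v) i = (√(w i) : 𝕜) • (x i - a • y i) := by
    rw [lp.coeFn_sub, Pi.sub_apply, hu, coe_smul, smul_sub]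
  have coe_smul_sub (i : ι) : (A • v - u) i = (√(w i) : 𝕜) • (A • y i - x i) := by
    rw [lp.coeFn_sub, Pi.sub_apply, hu, coe_smul, smul_sub]
  rw [← re_inner_lp_two_eq_tsum_of_eq_sqrt_smul hw coe_sub_smul coe_smul_sub] at h
  rw [Real.sqrt_mul (tsum_nonneg fun i => mul_nonneg (hw i) (sq_nonneg _)),
    ← norm_lp_two_eq_sqrt_tsum_of_eq_sqrt_smul hw hu,
    ← norm_lp_two_eq_sqrt_tsum_of_eq_sqrt_smul hw hv,
    ← re_inner_lp_two_eq_tsum_of_eq_sqrt_smul hw (coe_smul (a + A)) hu]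
  exact norm_mul_norm_le_re_inner_div_of_re_inner_nonneg haA h

end WeightedSequences

/-- Proposition 5.5. -/
theorem weighted_sequence_cassels {𝕜 : Type*} [RCLike 𝕜]
    (w : ℕ → ℝ) (hw : ∀ i, 0 ≤ w i) (m M : ℝ) (hm : 0 < m) (hM : 0 < M)
    (x y : ℕ → 𝕜)
    (hx : Summable fun i => w i * ‖x i‖ ^ 2) (hy : Summable fun i => w i * ‖y i‖ ^ 2)
    (h : 0 ≤ ∑' i, w i * re (((M : 𝕜) * y i - x i) * (conj (x i) - (m : 𝕜) * conj (y i)))) :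
    Real.sqrt ((∑' i, w i * ‖x i‖ ^ 2) * (∑' i, w i * ‖y i‖ ^ 2)) ≤
      1 / 2 * ((M + m) / Real.sqrt (m * M)) * ∑' i, w i * re (x i * conj (y i)) := by
  have haA : re (conj (m : 𝕜) * M) = m * M := by simp
  have hinner (i : ℕ) : re ⟪((m : 𝕜) + M) • y i, x i⟫_𝕜 = (M + m) * re (x i * conj (y i)) := by
    rw [inner_smul_left, ← ofReal_add, conj_ofReal, re_ofReal_mul, inner_apply, add_comm m]
  have key := weighted_sequence_cassels_general hw (a := (m : 𝕜)) (A := M)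
    (haA.symm ▸ mul_pos hm hM) hx hy (by simpa [inner_apply] using h)
  simp only [haA, hinner, mul_left_comm (w _), tsum_mul_left] at key
  exact key.trans_eq (by ring)
end

section
/- Let w : ℕ → ℝ be a sequence of nonnegative reals, 𝕜 = ℝ or ℂ, and m, M > 0 real numbers. Let x, y : ℕ → 𝕜 be such that Σᵢ wᵢ·|xᵢ|² and Σᵢ wᵢ·|yᵢ|² are finite (summable). If Σᵢ wᵢ·Re[(M·yᵢ − xᵢ)·(conj(xᵢ) − m·conj(yᵢ))] ≥ 0, then both: (i) 0 ≤ (Σᵢ wᵢ·|xᵢ|² · Σᵢ wᵢ·|yᵢ|²)^(1/2) − Σᵢ wᵢ·Re(xᵢ·conj(yᵢ)) ≤ (√M − √m)²/(2√(m·M)) · Σᵢ wᵢ·Re(xᵢ·conj(yᵢ)), and (ii) 0 ≤ (Σᵢ wᵢ·|xᵢ|²)·(Σᵢ wᵢ·|yᵢ|²) − (Σᵢ wᵢ·Re(xᵢ·conj(yᵢ)))² ≤ (M − m)²/(4·m·M) · (Σᵢ wᵢ·Re(xᵢ·conj(yᵢ)))². -/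
open RCLike ComplexConjugate

/-!
Only real parts of inner products occur, so `𝕜` may be viewed as a real inner product space. There,
`0 ≤ ⟪M b - a, a - m b⟫` expands to `‖a‖² + m M ‖b‖² ≤ (M + m) ⟪a, b⟫`, and AM-GM on the left-hand
side gives `2 √(m M) ‖a‖ ‖b‖ ≤ (M + m) ⟪a, b⟫`; both inequalities are rearrangements of this reverse
Cauchy-Schwarz inequality. Weighted sequences are the case `a = (√wᵢ xᵢ)`, `b = (√wᵢ yᵢ)` in `ℓ²`.
-/

section InnerProductSpace

open scoped RealInnerProductSpace

variable {E : Type*} [SeminormedAddCommGroup E] [InnerProductSpace ℝ E] {m M : ℝ} {a b : E}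

theorem real_inner_smul_sub_sub_smul (m M : ℝ) (a b : E) :
    ⟪M • b - a, a - m • b⟫ = (M + m) * ⟪a, b⟫ - (‖a‖ ^ 2 + m * M * ‖b‖ ^ 2) := by
  simp only [inner_sub_left, inner_sub_right, real_inner_smul_left, real_inner_smul_right,
    real_inner_self_eq_norm_sq, real_inner_comm a b]
  ring

theorem two_mul_sqrt_mul_norm_mul_norm_le (hmM : 0 ≤ m * M)
    (h : 0 ≤ ⟪M • b - a, a - m • b⟫) :
    2 * √(m * M) * (‖a‖ * ‖b‖) ≤ (M + m) * ⟪a, b⟫ := by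
  rw [real_inner_smul_sub_sub_smul, sub_nonneg] at h
  calc 2 * √(m * M) * (‖a‖ * ‖b‖) = 2 * ‖a‖ * (√(m * M) * ‖b‖) := by ring
    _ ≤ ‖a‖ ^ 2 + (√(m * M) * ‖b‖) ^ 2 := two_mul_le_add_sq _ _
    _ = ‖a‖ ^ 2 + m * M * ‖b‖ ^ 2 := by rw [mul_pow, Real.sq_sqrt hmM]
    _ ≤ (M + m) * ⟪a, b⟫ := h

theorem norm_mul_norm_sub_real_inner_le (hm : 0 < m) (hM : 0 < M)
    (h : 0 ≤ ⟪M • b - a, a - m • b⟫) :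
    ‖a‖ * ‖b‖ - ⟪a, b⟫ ≤ (√M - √m) ^ 2 / (2 * √(m * M)) * ⟪a, b⟫ := by
  have hmM : 0 < m * M := mul_pos hm hM
  have sq_sqrt_sub_sqrt : (√M - √m) ^ 2 = M + m - 2 * √(m * M) := by
    rw [sub_sq, Real.sq_sqrt hM.le, Real.sq_sqrt hm.le, Real.sqrt_mul hm.le]
    ring
  rw [div_mul_eq_mul_div, le_div_iff₀ (by positivity), sq_sqrt_sub_sqrt]
  linarith [two_mul_sqrt_mul_norm_mul_norm_le hmM.le h]

theorem norm_sq_mul_norm_sq_sub_real_inner_sq_le (hmM : 0 < m * M)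
    (h : 0 ≤ ⟪M • b - a, a - m • b⟫) :
    ‖a‖ ^ 2 * ‖b‖ ^ 2 - ⟪a, b⟫ ^ 2 ≤ (M - m) ^ 2 / (4 * m * M) * ⟪a, b⟫ ^ 2 := by
  have reverse_sq : 4 * (m * M) * (‖a‖ ^ 2 * ‖b‖ ^ 2) ≤ (M + m) ^ 2 * ⟪a, b⟫ ^ 2 :=
    calc 4 * (m * M) * (‖a‖ ^ 2 * ‖b‖ ^ 2) = (2 * √(m * M) * (‖a‖ * ‖b‖)) ^ 2 := by
          simp only [mul_pow, Real.sq_sqrt hmM.le]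
          norm_num
      _ ≤ ((M + m) * ⟪a, b⟫) ^ 2 :=
          pow_le_pow_left₀ (by positivity) (two_mul_sqrt_mul_norm_mul_norm_le hmM.le h) 2
      _ = (M + m) ^ 2 * ⟪a, b⟫ ^ 2 := mul_pow _ _ 2
  rw [div_mul_eq_mul_div, mul_assoc 4 m M, le_div_iff₀ (by positivity)]
  linarith

theorem real_inner_sq_le_norm_sq_mul_norm_sq (a b : E) : ⟪a, b⟫ ^ 2 ≤ ‖a‖ ^ 2 * ‖b‖ ^ 2 := by
  simpa only [real_inner_self_eq_norm_sq, ← sq] using real_inner_mul_inner_self_le a b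

end InnerProductSpace

section WeightedFamily

open scoped RealInnerProductSpace

theorem memℓp_two_sqrt_smul {ι E : Type*} [NormedAddCommGroup E] [NormedSpace ℝ E] {w : ι → ℝ}
    {x : ι → E} (hw : ∀ i, 0 ≤ w i) (hx : Summable fun i => w i * ‖x i‖ ^ 2) :
    Memℓp (fun i => √(w i) • x i) 2 :=
  memℓp_gen <| by simpa [norm_smul, mul_pow, Real.sq_sqrt (hw _)] using hx

variable {ι E : Type*} [NormedAddCommGroup E] [InnerProductSpace ℝ E] {w : ι → ℝ} {x y : ι → E}

theorem hasSum_weighted_real_inner (hw : ∀ i, 0 ≤ w i) {a b : lp (fun _ : ι => E) 2}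
    (ha : ∀ i, a i = √(w i) • x i) (hb : ∀ i, b i = √(w i) • y i) :
    HasSum (fun i => w i * ⟪x i, y i⟫) ⟪a, b⟫ := by
  simpa only [ha, hb, real_inner_smul_left, real_inner_smul_right, ← mul_assoc,
    Real.mul_self_sqrt (hw _)] using lp.hasSum_inner (𝕜 := ℝ) a b

theorem weighted_sequence_cassels_additive_general (hw : ∀ i, 0 ≤ w i) {m M : ℝ} (hm : 0 < m)
    (hM : 0 < M) (hx : Summable fun i => w i * ‖x i‖ ^ 2) (hy : Summable fun i => w i * ‖y i‖ ^ 2)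
    (h : 0 ≤ ∑' i, w i * ⟪M • y i - x i, x i - m • y i⟫) :
    (0 ≤ √((∑' i, w i * ‖x i‖ ^ 2) * (∑' i, w i * ‖y i‖ ^ 2)) - ∑' i, w i * ⟪x i, y i⟫ ∧
        √((∑' i, w i * ‖x i‖ ^ 2) * (∑' i, w i * ‖y i‖ ^ 2)) - ∑' i, w i * ⟪x i, y i⟫ ≤
          (√M - √m) ^ 2 / (2 * √(m * M)) * ∑' i, w i * ⟪x i, y i⟫) ∧
      (0 ≤ (∑' i, w i * ‖x i‖ ^ 2) * (∑' i, w i * ‖y i‖ ^ 2) - (∑' i, w i * ⟪x i, y i⟫) ^ 2 ∧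
        (∑' i, w i * ‖x i‖ ^ 2) * (∑' i, w i * ‖y i‖ ^ 2) - (∑' i, w i * ⟪x i, y i⟫) ^ 2 ≤
          (M - m) ^ 2 / (4 * m * M) * (∑' i, w i * ⟪x i, y i⟫) ^ 2) := by
  let a : lp (fun _ : ι => E) 2 := ⟨_, memℓp_two_sqrt_smul hw hx⟩
  let b : lp (fun _ : ι => E) 2 := ⟨_, memℓp_two_sqrt_smul hw hy⟩
  have ha (i : ι) : a i = √(w i) • x i := rfl
  have hb (i : ι) : b i = √(w i) • y i := rfl
  have norm_sq_a : ∑' i, w i * ‖x i‖ ^ 2 = ‖a‖ ^ 2 := by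
    simpa only [real_inner_self_eq_norm_sq] using (hasSum_weighted_real_inner hw ha ha).tsum_eq
  have norm_sq_b : ∑' i, w i * ‖y i‖ ^ 2 = ‖b‖ ^ 2 := by
    simpa only [real_inner_self_eq_norm_sq] using (hasSum_weighted_real_inner hw hb hb).tsum_eq
  have inner_nonneg : 0 ≤ ⟪M • b - a, a - m • b⟫ := by
    have hleft (i : ι) : (M • b - a) i = √(w i) • (M • y i - x i) := by
      rw [lp.coeFn_sub, Pi.sub_apply, lp.coeFn_smul, Pi.smul_apply, ha, hb, smul_sub, smul_comm M]
    have hright (i : ι) : (a - m • b) i = √(w i) • (x i - m • y i) := by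
      rw [lp.coeFn_sub, Pi.sub_apply, lp.coeFn_smul, Pi.smul_apply, ha, hb, smul_sub, smul_comm m]
    rwa [(hasSum_weighted_real_inner hw hleft hright).tsum_eq] at h
  rw [norm_sq_a, norm_sq_b, (hasSum_weighted_real_inner hw ha hb).tsum_eq, ← mul_pow,
    Real.sqrt_sq (by positivity), mul_pow]
  exact ⟨⟨sub_nonneg.mpr (real_inner_le_norm a b),
      norm_mul_norm_sub_real_inner_le hm hM inner_nonneg⟩,
    sub_nonneg.mpr (real_inner_sq_le_norm_sq_mul_norm_sq a b),
    norm_sq_mul_norm_sq_sub_real_inner_sq_le (mul_pos hm hM) inner_nonneg⟩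

end WeightedFamily

section RCLike

open scoped RealInnerProductSpace

variable {𝕜 : Type*} [RCLike 𝕜]

theorem re_mul_conj_eq_real_inner (a b : 𝕜) : re (a * conj b) = ⟪a, b⟫ :=
  real_inner_comm a b

theorem re_mul_sub_mul_conj_sub_eq_real_inner (m M : ℝ) (a b : 𝕜) :
    re (((M : 𝕜) * b - a) * (conj a - (m : 𝕜) * conj b)) = ⟪M • b - a, a - m • b⟫ := by
  simp only [← re_mul_conj_eq_real_inner, real_smul_eq_coe_mul, map_sub, map_mul, conj_ofReal]

end RCLike

/-- Corollary 5.6, inequalities (5.9) and (5.10). -/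
theorem weighted_sequence_cassels_additive {𝕜 : Type*} [RCLike 𝕜]
    (w : ℕ → ℝ) (hw : ∀ i, 0 ≤ w i) (m M : ℝ) (hm : 0 < m) (hM : 0 < M)
    (x y : ℕ → 𝕜)
    (hx : Summable fun i => w i * ‖x i‖ ^ 2) (hy : Summable fun i => w i * ‖y i‖ ^ 2)
    (h : 0 ≤ ∑' i, w i * re (((M : 𝕜) * y i - x i) * (conj (x i) - (m : 𝕜) * conj (y i)))) :
    (0 ≤ Real.sqrt ((∑' i, w i * ‖x i‖ ^ 2) * (∑' i, w i * ‖y i‖ ^ 2)) -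
          ∑' i, w i * re (x i * conj (y i)) ∧
        Real.sqrt ((∑' i, w i * ‖x i‖ ^ 2) * (∑' i, w i * ‖y i‖ ^ 2)) -
            (∑' i, w i * re (x i * conj (y i))) ≤
          (Real.sqrt M - Real.sqrt m) ^ 2 / (2 * Real.sqrt (m * M)) *
            ∑' i, w i * re (x i * conj (y i))) ∧
      (0 ≤ (∑' i, w i * ‖x i‖ ^ 2) * (∑' i, w i * ‖y i‖ ^ 2) -
            (∑' i, w i * re (x i * conj (y i))) ^ 2 ∧
        (∑' i, w i * ‖x i‖ ^ 2) * (∑' i, w i * ‖y i‖ ^ 2) -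
            (∑' i, w i * re (x i * conj (y i))) ^ 2 ≤
          (M - m) ^ 2 / (4 * m * M) * (∑' i, w i * re (x i * conj (y i))) ^ 2) := by
  simp only [re_mul_conj_eq_real_inner, re_mul_sub_mul_conj_sub_eq_real_inner] at h ⊢
  exact weighted_sequence_cassels_additive_general hw hm hM hx hy h
end
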